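/- Let K be a real n×p matrix, y ∈ ℝⁿ, λ > 0, and define T(x) = S_λ[x + Kᵀ(y − Kx)]. Assume the operator norm ‖K‖ < √2. Then a vector x* ∈ ℝᵖ is a fixed point of T (i.e., T(x*) = x*) if and only if x* is a minimizer of F_λ(x) = ‖Kx − y‖² + 2λ‖x‖₁ over ℝᵖ. -/

import Mathlib

open Finset

/-- The soft-thresholding operator `S_λ`, acting componentwise:
`(S_λ[b])_i = b_i − λ·sgn(b_i)` if `|b_i| > λ`, and `0` otherwise. -/
noncomputable def softThreshold (p : ℕ) (lam : ℝ) (b : Fin p → ℝ) : Fin p → ℝ :=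
  fun i => if lam < |b i| then b i - lam * Real.sign (b i) else 0

/-!
Since `x ↦ ‖Kx − y‖²` is convex with gradient `-2g` at `x*`, where `g = Kᵀ(y − Kx*)`, the vector
`x*` minimizes the lasso functional iff `g` is a subgradient of `λ‖·‖₁` at `x*`. The `ℓ₁` norm is
separable, so this is a condition on each coordinate, and in one variable `g` is a subgradient of
`λ|·|` at `x` iff `x` is the soft threshold of `x + g`.
-/

theorem forall_sum_le_sum_iff {ι : Type*} [Fintype ι] {α : ι → Type*} {M : Type*}
    [AddCommMonoid M] [PartialOrder M] [IsOrderedCancelAddMonoid M]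
    {f : ∀ i, α i → M} {a : ∀ i, α i} :
    (∀ x : ∀ i, α i, ∑ i, f i (a i) ≤ ∑ i, f i (x i)) ↔ ∀ i t, f i (a i) ≤ f i t := by
  classical
  refine ⟨fun h i t => ?_, fun h x => sum_le_sum fun i _ => h i (x i)⟩
  have sum_le := h (Function.update a i t)
  have sum_erase : ∑ j ∈ univ.erase i, f j (Function.update a i t j) =
      ∑ j ∈ univ.erase i, f j (a j) :=
    sum_congr rfl fun j hj => by rw [Function.update_of_ne (ne_of_mem_erase hj)]
  rw [← add_sum_erase _ _ (mem_univ i), ← add_sum_erase _ _ (mem_univ i), sum_erase,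
    Function.update_self] at sum_le
  exact le_of_add_le_add_right sum_le

open Topology Filter in
theorem nonneg_of_forall_Ioc_mul_add_nonneg {a b : ℝ}
    (h : ∀ s ∈ Set.Ioc (0 : ℝ) 1, 0 ≤ s * a + b) : 0 ≤ b := by
  have tendsto_b : Tendsto (fun s : ℝ => s * a + b) (𝓝[>] 0) (𝓝 b) := by
    have cont : Continuous fun s : ℝ => s * a + b := by fun_prop
    simpa using (cont.tendsto 0).mono_left nhdsWithin_le_nhds
  exact ge_of_tendsto tendsto_b (eventually_of_mem (Ioc_mem_nhdsGT one_pos) h)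

section Subgradient

variable {E : Type*} [AddCommGroup E] [Module ℝ E]

/-- `ℓ` is a subgradient of `φ` at `a`: the affine function through `(a, φ a)` with slope `ℓ`
minorizes `φ`. Taking `ℓ` in the dual space avoids choosing an inner product on `E`. -/
def IsSubgradientAt (φ : E → ℝ) (ℓ : Module.Dual ℝ E) (a : E) : Prop :=
  ∀ x, φ a + ℓ (x - a) ≤ φ x

theorem isSubgradientAt_mul_abs_iff {lam g x : ℝ} :
    IsSubgradientAt (fun t => lam * |t|) (LinearMap.mulLeft ℝ g) x ↔
      g * x = lam * |x| ∧ |g| ≤ lam := by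
  simp only [IsSubgradientAt, LinearMap.mulLeft_apply]
  constructor
  · intro h
    have at_zero : lam * |x| - g * x ≤ 0 := by simpa [← sub_eq_add_neg] using h 0
    have at_two_mul : lam * |x| + g * x ≤ lam * (2 * |x|) := by
      have subgradient_at := h (2 * x)
      rwa [abs_mul, abs_two, two_mul x, add_sub_cancel_right] at subgradient_at
    have g_mul_x : g * x = lam * |x| := by linarith
    have g_mul_le (t : ℝ) : g * t ≤ lam * |t| := by linarith [h t]
    have g_le : g ≤ lam := by simpa using g_mul_le 1
    have neg_g_le : -g ≤ lam := by simpa using g_mul_le (-1)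
    exact ⟨g_mul_x, abs_le'.2 ⟨g_le, neg_g_le⟩⟩
  · rintro ⟨g_mul_x, abs_g_le⟩ t
    calc lam * |x| + g * (t - x) = g * t := by rw [← g_mul_x]; ring
      _ ≤ |g| * |t| := (le_abs_self _).trans_eq (abs_mul g t)
      _ ≤ lam * |t| := by gcongr

theorem isSubgradientAt_sum_iff {ι : Type*} [Fintype ι] {G : ι → Type*}
    [∀ i, AddCommGroup (G i)] [∀ i, Module ℝ (G i)] {φ : ∀ i, G i → ℝ}
    {ℓ : ∀ i, Module.Dual ℝ (G i)} {a : ∀ i, G i} :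
    IsSubgradientAt (fun x : ∀ i, G i => ∑ i, φ i (x i)) (∑ i, ℓ i ∘ₗ LinearMap.proj i) a ↔
      ∀ i, IsSubgradientAt (φ i) (ℓ i) (a i) := by
  have separable := forall_sum_le_sum_iff (f := fun i t => φ i t - ℓ i (t - a i)) (a := a)
  simpa only [IsSubgradientAt, sub_self, map_zero, sub_zero, sum_sub_distrib, le_sub_iff_add_le,
    LinearMap.sum_apply, LinearMap.comp_apply, LinearMap.proj_apply, Pi.sub_apply] using separable

variable {F : Type*} [NormedAddCommGroup F] [InnerProductSpace ℝ F]

theorem norm_map_add_sub_sq (A : E →ₗ[ℝ] F) (y : F) (x d : E) :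
    ‖A (x + d) - y‖ ^ 2 = ‖A x - y‖ ^ 2 - 2 * inner ℝ (y - A x) (A d) + ‖A d‖ ^ 2 := by
  rw [map_add, add_sub_right_comm, norm_add_sq_real, ← neg_sub y (A x), inner_neg_left]
  ring

theorem minimizer_norm_map_sub_sq_add_iff_isSubgradientAt (A : E →ₗ[ℝ] F) (y : F) {φ : E → ℝ}
    (hφ : ConvexOn ℝ Set.univ φ) {a : E} :
    (∀ x, ‖A a - y‖ ^ 2 + 2 * φ a ≤ ‖A x - y‖ ^ 2 + 2 * φ x) ↔
      IsSubgradientAt φ (innerₗ F (y - A a) ∘ₗ A) a := by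
  constructor
  · intro a_min x
    rw [LinearMap.comp_apply, innerₗ_apply_apply]
    suffices 0 ≤ 2 * (φ x - φ a - inner ℝ (y - A a) (A (x - a))) by linarith
    refine nonneg_of_forall_Ioc_mul_add_nonneg (a := ‖A (x - a)‖ ^ 2) fun s ⟨s_pos, s_le_one⟩ => ?_
    have φ_segment : φ (a + s • (x - a)) ≤ (1 - s) * φ a + s * φ x := by
      have convex := hφ.2 (Set.mem_univ a) (Set.mem_univ x) (sub_nonneg.2 s_le_one) s_pos.le
        (sub_add_cancel 1 s)
      rwa [show (1 - s) • a + s • x = a + s • (x - a) by module] at convex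
    have expansion := norm_map_add_sub_sq A y a (s • (x - a))
    rw [map_smul, inner_smul_right, norm_smul, mul_pow, Real.norm_eq_abs, sq_abs] at expansion
    refine nonneg_of_mul_nonneg_right (a := s) ?_ s_pos
    linarith [a_min (a + s • (x - a))]
  · intro subgradient x
    have expansion := norm_map_add_sub_sq A y a (x - a)
    rw [add_sub_cancel] at expansion
    have subgradient_x : φ a + inner ℝ (y - A a) (A (x - a)) ≤ φ x := subgradient x
    linarith [sq_nonneg ‖A (x - a)‖]

end Subgradient

section SoftThreshold

variable {p : ℕ} {lam : ℝ}

theorem softThreshold_of_lt {b : Fin p → ℝ} {i : Fin p} (hlam : 0 ≤ lam) (hb : lam < b i) :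
    softThreshold p lam b i = b i - lam := by
  have b_pos : 0 < b i := hlam.trans_lt hb
  simp [softThreshold, abs_of_pos b_pos, Real.sign_of_pos b_pos, hb]

theorem softThreshold_of_lt_neg {b : Fin p → ℝ} {i : Fin p} (hlam : 0 ≤ lam) (hb : b i < -lam) :
    softThreshold p lam b i = b i + lam := by
  have b_neg : b i < 0 := by linarith
  simp [softThreshold, abs_of_neg b_neg, Real.sign_of_neg b_neg, lt_neg_of_lt_neg hb]

theorem softThreshold_of_abs_le {b : Fin p → ℝ} {i : Fin p} (hb : |b i| ≤ lam) :
    softThreshold p lam b i = 0 :=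
  if_neg hb.not_gt

theorem softThreshold_apply_eq_iff (hlam : 0 ≤ lam) {b : Fin p → ℝ} {i : Fin p} {x : ℝ} :
    softThreshold p lam b i = x ↔ (b i - x) * x = lam * |x| ∧ |b i - x| ≤ lam := by
  constructor
  · rintro rfl
    rcases le_or_gt |b i| lam with small | large
    · simpa [softThreshold_of_abs_le small] using small
    · rcases lt_abs.1 large with pos | neg
      · rw [softThreshold_of_lt hlam pos, abs_of_pos (sub_pos.2 pos), sub_sub_cancel]
        exact ⟨rfl, (abs_of_nonneg hlam).le⟩
      · have b_lt : b i < -lam := lt_neg_of_lt_neg neg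
        rw [softThreshold_of_lt_neg hlam b_lt, abs_of_neg (by linarith), sub_add_cancel_left,
          abs_neg, abs_of_nonneg hlam]
        exact ⟨by ring, le_rfl⟩
  · rintro ⟨mul_eq, abs_le_lam⟩
    rcases lt_trichotomy x 0 with x_neg | rfl | x_pos
    · have b_sub : b i - x = -lam :=
        mul_right_cancel₀ x_neg.ne (by rw [mul_eq, abs_of_neg x_neg]; ring)
      rw [softThreshold_of_lt_neg hlam (by linarith)]
      linarith
    · exact softThreshold_of_abs_le (by simpa using abs_le_lam)
    · have b_sub : b i - x = lam :=
        mul_right_cancel₀ x_pos.ne' (by rw [mul_eq, abs_of_pos x_pos])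
      rw [softThreshold_of_lt hlam (by linarith)]
      linarith

theorem softThreshold_add_eq_self_iff_isSubgradientAt (hlam : 0 ≤ lam) {x g : Fin p → ℝ} :
    softThreshold p lam (x + g) = x ↔
      ∀ i, IsSubgradientAt (fun t => lam * |t|) (LinearMap.mulLeft ℝ (g i)) (x i) := by
  simp only [funext_iff, softThreshold_apply_eq_iff hlam, Pi.add_apply, add_sub_cancel_left,
    isSubgradientAt_mul_abs_iff]

end SoftThreshold

section Lasso

variable {m ι : Type*} [Fintype m] [Fintype ι]

theorem convexOn_univ_sum_abs : ConvexOn ℝ Set.univ fun x : ι → ℝ => ∑ i, |x i| := by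
  simpa [Function.comp_def, PiLp.norm_eq_of_L1] using
    (convexOn_univ_norm (E := PiLp 1 fun _ : ι => ℝ)).comp_linearMap
      (WithLp.linearEquiv 1 ℝ (ι → ℝ)).symm.toLinearMap

theorem inner_toLp_mulVec (K : Matrix m ι ℝ) (r : m → ℝ) (d : ι → ℝ) :
    inner ℝ (WithLp.toLp 2 r) (WithLp.toLp 2 (K.mulVec d)) =
      ∑ i, K.transpose.mulVec r i * d i := by
  rw [EuclideanSpace.inner_toLp_toLp, star_trivial, dotProduct_comm, Matrix.dotProduct_mulVec,
    ← Matrix.mulVec_transpose, dotProduct]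

theorem lasso_minimizer_iff_isSubgradientAt (K : Matrix m ι ℝ) (y : m → ℝ) {lam : ℝ}
    (hlam : 0 ≤ lam) (a : ι → ℝ) :
    (∀ x : ι → ℝ, (∑ j, (K.mulVec a j - y j) ^ 2) + 2 * lam * ∑ i, |a i|
        ≤ (∑ j, (K.mulVec x j - y j) ^ 2) + 2 * lam * ∑ i, |x i|) ↔
      ∀ i, IsSubgradientAt (fun t => lam * |t|)
        (LinearMap.mulLeft ℝ (K.transpose.mulVec (y - K.mulVec a) i)) (a i) := by
  let A : (ι → ℝ) →ₗ[ℝ] EuclideanSpace ℝ m :=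
    (WithLp.linearEquiv 2 ℝ (m → ℝ)).symm.toLinearMap ∘ₗ K.mulVecLin
  have norm_sq (x : ι → ℝ) :
      ‖A x - WithLp.toLp 2 y‖ ^ 2 = ∑ j, (K.mulVec x j - y j) ^ 2 := by
    simp [A, EuclideanSpace.real_norm_sq_eq]
  have slope : innerₗ (EuclideanSpace ℝ m) (WithLp.toLp 2 y - A a) ∘ₗ A =
      ∑ i, LinearMap.mulLeft ℝ (K.transpose.mulVec (y - K.mulVec a) i) ∘ₗ LinearMap.proj i := by
    refine LinearMap.ext fun d => (inner_toLp_mulVec K (y - K.mulVec a) d).trans ?_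
    simp only [LinearMap.sum_apply, LinearMap.comp_apply, LinearMap.proj_apply,
      LinearMap.mulLeft_apply]
  have optimality := minimizer_norm_map_sub_sq_add_iff_isSubgradientAt A (WithLp.toLp 2 y)
    (convexOn_univ_sum_abs.smul hlam) (a := a)
  rw [← isSubgradientAt_sum_iff (φ := fun _ t => lam * |t|)]
  simpa only [norm_sq, slope, smul_eq_mul, mul_sum, mul_assoc] using optimality

end Lasso

theorem fixedPoint_iff_lasso_minimizer_general {m : Type*} [Fintype m] {p : ℕ}
    (K : Matrix m (Fin p) ℝ) (y : m → ℝ) {lam : ℝ} (hlam : 0 ≤ lam) (xstar : Fin p → ℝ) :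
    softThreshold p lam (xstar + K.transpose.mulVec (y - K.mulVec xstar)) = xstar
      ↔ ∀ x : Fin p → ℝ,
          (∑ j, (K.mulVec xstar j - y j) ^ 2) + 2 * lam * ∑ i, |xstar i|
            ≤ (∑ j, (K.mulVec x j - y j) ^ 2) + 2 * lam * ∑ i, |x i| := by
  rw [softThreshold_add_eq_self_iff_isSubgradientAt hlam,
    lasso_minimizer_iff_isSubgradientAt K y hlam]

/-- with `T(x) = S_λ[x + Kᵀ(y − Kx)]` and `‖K‖ < √2` (operator norm),
`x*` is a fixed point of `T` iff `x*` minimizes `F_λ(x) = ‖Kx − y‖² + 2λ‖x‖₁`. -/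
theorem fixedPoint_iff_lasso_minimizer (n p : ℕ) (K : Matrix (Fin n) (Fin p) ℝ)
    (y : Fin n → ℝ) (lam : ℝ) (hlam : 0 < lam)
    (hK : ‖LinearMap.toContinuousLinearMap (Matrix.toEuclideanLin K)‖ < Real.sqrt 2)
    (xstar : Fin p → ℝ) :
    softThreshold p lam (xstar + K.transpose.mulVec (y - K.mulVec xstar)) = xstar
      ↔ ∀ x : Fin p → ℝ,
          (∑ j, (K.mulVec xstar j - y j) ^ 2) + 2 * lam * ∑ i, |xstar i|
            ≤ (∑ j, (K.mulVec x j - y j) ^ 2) + 2 * lam * ∑ i, |x i| :=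
  fixedPoint_iff_lasso_minimizer_general K y hlam.le xstar
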